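/- Let a > 0 and 0 < α < √a. Define the linear functional 𝔖^{(α)} : ℝ[X] → ℝ by 𝔖^{(α)}(f) = 𝔖((X − α)·f), and define Φ_{2j}^{(α)}(X) = P_j(X²) and Φ_{2j+1}^{(α)}(X) = (X + α)·P̃_j^{(α)}(X²). Then each Φ_n^{(α)} is monic of degree n, 𝔖^{(α)}(Φ_m^{(α)}·Φ_n^{(α)}) = 0 whenever m ≠ n, and 𝔖^{(α)}((Φ_n^{(α)})²) > 0 for every n ≥ 0. (This is the Chihara construction realized as a shifted extended Darboux transformation, whose associated function is (λ − α)·S(λ²).) -/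

import Mathlib

open Polynomial MeasureTheory

/-!
Write `L f = S (X · f(X²))`. The moment conditions say that `L` is integration against `μ` and that
`S` vanishes on `f(X²)`. Hence the functional `f ↦ S ((X - α) f)` acts on products of the `Φ_n` by

* even–even: `L (P_i P_j)`;
* even–odd: `S` of `(X² - α²) · (P_i P̃_j)(X²)`, a polynomial in `X²`, so `0`;
* odd–odd: `L ((X - α²) P̃_i P̃_j)`, because `(X - α)(X + α)² = (X² - α²)(X + α)`.

Since `(X - α²) P̃_j = P_{j+1} - c_j P_j` is orthogonal to all polynomials of degree `< j`, the
off-diagonal odd terms vanish, and the diagonal ones equal `-c_j L (P_j P̃_j) = -c_j L (P_j²)`,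
where `c_j = P_{j+1}(α²) / P_j(α²) < 0` by the sign alternation of `P_j(α²)`. Finally
`L (P_j²) > 0`: it is the integral of a square, and if it vanished, the coefficient vector of `P_j`
would be a nonzero kernel vector of a Hankel matrix with positive determinant.
-/

theorem integrable_eval_of_moments (μ : Measure ℝ)
    (hint : ∀ j : ℕ, Integrable (fun t : ℝ => t ^ j) μ) (f : ℝ[X]) :
    Integrable (fun t : ℝ => f.eval t) μ := by
  induction f using Polynomial.induction_on' with
  | add p q hp hq =>
    simp only [eval_add]
    exact hp.add hq
  | monomial n c => simpa only [eval_monomial] using (hint n).const_mul c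

/-- A linear functional with the moments of `μ` is integration against `μ`. -/
theorem functional_eq_integral (μ : Measure ℝ)
    (hint : ∀ j : ℕ, Integrable (fun t : ℝ => t ^ j) μ) (L : ℝ[X] →ₗ[ℝ] ℝ)
    (hL : ∀ j : ℕ, L (X ^ j) = ∫ t, t ^ j ∂μ) (f : ℝ[X]) :
    L f = ∫ t, f.eval t ∂μ := by
  induction f using Polynomial.induction_on' with
  | add p q hp hq =>
    simp only [eval_add, map_add, hp, hq]
    exact (integral_add (integrable_eval_of_moments μ hint p)
      (integrable_eval_of_moments μ hint q)).symm
  | monomial n c =>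
    simp only [eval_monomial]
    rw [integral_const_mul, ← hL, ← smul_X_eq_monomial, map_smul, smul_eq_mul]

theorem functional_mul_eq_sum (L : ℝ[X] →ₗ[ℝ] ℝ) (p Q : ℝ[X]) :
    L (p * Q) = ∑ k ∈ Q.support, Q.coeff k * L (p * X ^ k) := by
  conv_lhs => rw [Q.as_sum_support_C_mul_X_pow]
  rw [Finset.mul_sum, map_sum]
  refine Finset.sum_congr rfl fun k _ => ?_
  rw [mul_left_comm, ← smul_eq_C_mul, map_smul, smul_eq_mul]

theorem functional_orth_lower (L : ℝ[X] →ₗ[ℝ] ℝ) (p : ℝ[X]) (j : ℕ)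
    (h : ∀ k < j, L (p * X ^ k) = 0) (Q : ℝ[X]) (hQ : Q.degree < j) :
    L (p * Q) = 0 := by
  rw [functional_mul_eq_sum]
  refine Finset.sum_eq_zero fun k hk => ?_
  have hkj : k < j := by exact_mod_cast (le_degree_of_mem_supp k hk).trans_lt hQ
  rw [h k hkj, mul_zero]

/-- If `p` is monic of degree `j` and orthogonal to lower degrees, pairing it with any monic
polynomial of degree `j` gives `L (p²)`. -/
theorem functional_monic_pairing (L : ℝ[X] →ₗ[ℝ] ℝ) (p : ℝ[X]) (j : ℕ) (hp : p.Monic)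
    (hpd : p.natDegree = j) (h : ∀ k < j, L (p * X ^ k) = 0) (Q : ℝ[X]) (hQ : Q.Monic)
    (hQd : Q.natDegree = j) : L (p * Q) = L (p * p) := by
  have hd : (Q - p).degree < j := by
    have hQdeg : Q.degree = j := by rw [degree_eq_natDegree hQ.ne_zero, hQd]
    have hpdeg : p.degree = j := by rw [degree_eq_natDegree hp.ne_zero, hpd]
    rw [← hQdeg]
    exact degree_sub_lt_left (hQdeg.trans hpdeg.symm) hQ.ne_zero (by rw [hQ, hp])
  rw [← sub_eq_zero, ← map_sub, ← mul_sub]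
  exact functional_orth_lower L p j h _ hd

/-- Nondegeneracy: a nonsingular Hankel matrix excludes `L (p²) = 0`, as the coefficient vector of
`p` would lie in its kernel. -/
theorem functional_sq_ne_zero (L : ℝ[X] →ₗ[ℝ] ℝ) (p : ℝ[X]) (j : ℕ) (hp : p.Monic)
    (hpd : p.natDegree = j) (h : ∀ k < j, L (p * X ^ k) = 0)
    (hD : (Matrix.of fun i k : Fin (j + 1) => L (X ^ (i.1 + k.1))).det ≠ 0) :
    L (p * p) ≠ 0 := by
  intro h0
  have hall : ∀ k ≤ j, L (p * X ^ k) = 0 := by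
    intro k hk
    rcases hk.lt_or_eq with hk | rfl
    · exact h k hk
    · rw [functional_monic_pairing L p k hp hpd h _ (monic_X_pow k) (natDegree_X_pow k), h0]
  have hker := Matrix.eq_zero_of_mulVec_eq_zero hD (v := fun k => p.coeff k.1) (by
    funext i
    rw [Pi.zero_apply, ← hall i.1 (Nat.lt_succ_iff.mp i.2)]
    conv_rhs => rw [p.as_sum_range_C_mul_X_pow, hpd]
    rw [Finset.sum_mul, map_sum, Finset.sum_range, Matrix.mulVec, dotProduct]
    refine Finset.sum_congr rfl fun k _ => ?_
    rw [mul_assoc, ← pow_add, ← smul_eq_C_mul, map_smul, smul_eq_mul, Matrix.of_apply, mul_comm,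
      add_comm i.1])
  have hlead := congrFun hker (Fin.last j)
  have hone : p.coeff j = 1 := by rw [← hpd]; exact hp
  simp [hone] at hlead

/-- Chihara construction as a shifted extended Darboux
transformation: with `𝔖^{(α)}(f) = 𝔖((X - α)·f)`, `Φ^{(α)}_{2j} = P_j(X²)` and
`Φ^{(α)}_{2j+1} = (X + α)·P̃_j^{(α)}(X²)`, each `Φ^{(α)}_n` is monic of degree `n`,
`𝔖^{(α)}(Φ_m·Φ_n) = 0` for `m ≠ n` and `𝔖^{(α)}(Φ_n²) > 0` for every `n`. -/
theorem stmt_15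
    (a : ℝ) (ha : 0 < a)
    (μ : Measure ℝ) [IsProbabilityMeasure μ]
    (hsupp : ∀ᵐ t ∂μ, a ≤ t)
    (hint : ∀ j : ℕ, Integrable (fun t : ℝ => t ^ j) μ)
    (s : ℕ → ℝ) (hs : ∀ j, s j = ∫ t, t ^ j ∂μ)
    (hDpos : ∀ n : ℕ, 0 < (Matrix.of fun i k : Fin (n + 1) => s (i.1 + k.1)).det)
    (P : ℕ → Polynomial ℝ)
    (hPmonic : ∀ j, (P j).Monic) (hPdeg : ∀ j, (P j).natDegree = j)
    (hPorth : ∀ j k : ℕ, k < j → ∫ t, (P j).eval t * t ^ k ∂μ = 0)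
    (S : Polynomial ℝ →ₗ[ℝ] ℝ)
    (hSeven : ∀ j : ℕ, S (X ^ (2 * j)) = 0)
    (hSodd : ∀ j : ℕ, S (X ^ (2 * j + 1)) = s j)
    (α : ℝ) (hα0 : 0 < α) (hαa : α < Real.sqrt a)
    (hP0 : ∀ j : ℕ, 0 < (-1 : ℝ) ^ j * (P j).eval (α ^ 2))
    (Ptα : ℕ → Polynomial ℝ)
    (hPtα : ∀ j, (X - C (α ^ 2)) * Ptα j =
      P (j + 1) - C ((P (j + 1)).eval (α ^ 2) / (P j).eval (α ^ 2)) * P j)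
    (Φ : ℕ → Polynomial ℝ)
    (hΦeven : ∀ j, Φ (2 * j) = (P j).comp (X ^ 2))
    (hΦodd : ∀ j, Φ (2 * j + 1) = (X + C α) * (Ptα j).comp (X ^ 2)) :
    (∀ n : ℕ, (Φ n).Monic ∧ (Φ n).natDegree = n) ∧
    (∀ m n : ℕ, m ≠ n → S ((X - C α) * (Φ m * Φ n)) = 0) ∧
    (∀ n : ℕ, 0 < S ((X - C α) * (Φ n * Φ n))) := by
  -- `L f = S (X · f(X²))`
  let L : ℝ[X] →ₗ[ℝ] ℝ :=
    S ∘ₗ LinearMap.mulLeft ℝ (X : ℝ[X]) ∘ₗ (expand ℝ 2).toLinearMap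
  have hLdef : ∀ f : ℝ[X], S (X * f.comp (X ^ 2)) = L f := by
    intro f
    rw [← expand_eq_comp_X_pow]
    rfl
  have hLpow : ∀ j : ℕ, L (X ^ j) = s j := by
    intro j
    rw [← hLdef, ← hSodd, X_pow_comp]
    congr 1
    ring
  have hLint := functional_eq_integral μ hint L (fun j => (hLpow j).trans (hs j))
  have hSsq : ∀ f : ℝ[X], S (f.comp (X ^ 2)) = 0 := by
    intro f
    induction f using Polynomial.induction_on' with
    | add p q hp hq => rw [add_comp, map_add, hp, hq, add_zero]
    | monomial n c =>
      rw [monomial_comp, ← smul_eq_C_mul, map_smul, ← pow_mul, hSeven, smul_zero]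
  have horth : ∀ j, ∀ k < j, L (P j * X ^ k) = 0 := by
    intro j k hk
    rw [hLint, ← hPorth j k hk]
    simp only [eval_mul, eval_pow, eval_X]
  have hpos : ∀ j, 0 < L (P j * P j) := by
    intro j
    refine lt_of_le_of_ne ?_ (Ne.symm ?_)
    · rw [hLint]
      refine integral_nonneg fun t => ?_
      rw [eval_mul]
      exact mul_self_nonneg _
    · refine functional_sq_ne_zero L (P j) j (hPmonic j) (hPdeg j) (horth j) ?_
      simp only [hLpow]
      exact ne_of_gt (hDpos j)
  -- consecutive values at `α²` have opposite signs
  have hc : ∀ j, (P (j + 1)).eval (α ^ 2) / (P j).eval (α ^ 2) < 0 := by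
    intro j
    have h := mul_pos (hP0 j) (hP0 (j + 1))
    have h1 : ((-1 : ℝ) ^ j) * (-1) ^ j = 1 := by rw [← mul_pow]; simp
    have h2 : (P (j + 1)).eval (α ^ 2) * (P j).eval (α ^ 2) < 0 := by
      rw [pow_succ (-1 : ℝ) j] at h
      linear_combination h - (P (j + 1)).eval (α ^ 2) * (P j).eval (α ^ 2) * h1
    rcases mul_neg_iff.mp h2 with ⟨hx, hy⟩ | ⟨hx, hy⟩
    · exact div_neg_of_pos_of_neg hx hy
    · exact div_neg_of_neg_of_pos hx hy
  have hPt : ∀ j, (Ptα j).Monic ∧ (Ptα j).natDegree = j := by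
    intro j
    have hdeg : (C ((P (j + 1)).eval (α ^ 2) / (P j).eval (α ^ 2)) * P j).degree
        < (P (j + 1)).degree := by
      rw [← smul_eq_C_mul]
      refine (degree_smul_le _ _).trans_lt ?_
      rw [degree_eq_natDegree (hPmonic _).ne_zero, degree_eq_natDegree (hPmonic _).ne_zero,
        hPdeg, hPdeg]
      exact_mod_cast Nat.lt_succ_self j
    have hmon : ((X - C (α ^ 2)) * Ptα j).Monic := by
      rw [hPtα]
      exact (hPmonic _).sub_of_left hdeg
    have hm : (Ptα j).Monic := (monic_X_sub_C (α ^ 2)).of_mul_monic_left hmon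
    refine ⟨hm, ?_⟩
    have h1 := (monic_X_sub_C (α ^ 2)).natDegree_mul hm
    rw [hPtα, natDegree_sub_eq_left_of_natDegree_lt, hPdeg, natDegree_X_sub_C] at h1
    · omega
    · refine (natDegree_C_mul_le _ _).trans_lt ?_
      rw [hPdeg, hPdeg]
      exact Nat.lt_succ_self j
  have hee : ∀ i j, S ((X - C α) * (Φ (2 * i) * Φ (2 * j))) = L (P i * P j) := by
    intro i j
    have h : (X - C α) * (Φ (2 * i) * Φ (2 * j))
        = X * (P i * P j).comp (X ^ 2) - α • (P i * P j).comp (X ^ 2) := by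
      rw [hΦeven, hΦeven, mul_comp, smul_eq_C_mul]
      ring
    rw [h, map_sub, map_smul, hSsq, hLdef, smul_zero, sub_zero]
  have heo : ∀ i j, S ((X - C α) * (Φ (2 * i) * Φ (2 * j + 1))) = 0 := by
    intro i j
    have h : (X - C α) * (Φ (2 * i) * Φ (2 * j + 1))
        = ((X - C (α ^ 2)) * (P i * Ptα j)).comp (X ^ 2) := by
      rw [hΦeven, hΦodd, mul_comp, mul_comp, sub_comp, X_comp, C_comp, C_pow]
      ring
    rw [h, hSsq]
  have hoo : ∀ i j, S ((X - C α) * (Φ (2 * i + 1) * Φ (2 * j + 1)))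
      = L ((X - C (α ^ 2)) * Ptα j * Ptα i) := by
    intro i j
    have h : (X - C α) * (Φ (2 * i + 1) * Φ (2 * j + 1))
        = X * ((X - C (α ^ 2)) * Ptα j * Ptα i).comp (X ^ 2)
          + α • ((X - C (α ^ 2)) * Ptα j * Ptα i).comp (X ^ 2) := by
      rw [hΦodd, hΦodd, mul_comp, mul_comp, sub_comp, X_comp, C_comp, C_pow, smul_eq_C_mul]
      ring
    rw [h, map_add, map_smul, hSsq, hLdef, smul_zero, add_zero]
  -- the term `P (j + 1)` of `(X - α²) P̃_j` does not see degrees `≤ j`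
  have hker : ∀ (j : ℕ) (Q : ℝ[X]), Q.degree ≤ j → L ((X - C (α ^ 2)) * Ptα j * Q)
      = -((P (j + 1)).eval (α ^ 2) / (P j).eval (α ^ 2)) * L (P j * Q) := by
    intro j Q hQ
    rw [hPtα, sub_mul, map_sub, functional_orth_lower L _ (j + 1) (horth (j + 1)) Q
      (hQ.trans_lt (by exact_mod_cast Nat.lt_succ_self j)), mul_assoc, ← smul_eq_C_mul, map_smul,
      smul_eq_mul]
    ring
  have hPtdeg : ∀ j, (Ptα j).degree = j := fun j => by
    rw [degree_eq_natDegree (hPt j).1.ne_zero, (hPt j).2]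
  have hPdeg' : ∀ j, (P j).degree = j := fun j => by
    rw [degree_eq_natDegree (hPmonic j).ne_zero, hPdeg]
  have hee0 : ∀ i j, i < j → S ((X - C α) * (Φ (2 * i) * Φ (2 * j))) = 0 := by
    intro i j hij
    rw [hee, mul_comm]
    exact functional_orth_lower L _ j (horth j) _ (by rw [hPdeg']; exact_mod_cast hij)
  have hoo0 : ∀ i j, i < j → S ((X - C α) * (Φ (2 * i + 1) * Φ (2 * j + 1))) = 0 := by
    intro i j hij
    have hlt : (Ptα i).degree < j := by rw [hPtdeg]; exact_mod_cast hij
    rw [hoo, hker j _ hlt.le, functional_orth_lower L _ j (horth j) _ hlt, mul_zero]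
  have hlt0 : ∀ m n, m < n → S ((X - C α) * (Φ m * Φ n)) = 0 := by
    intro m n hmn
    obtain ⟨i, rfl | rfl⟩ := Nat.even_or_odd' m <;> obtain ⟨j, rfl | rfl⟩ := Nat.even_or_odd' n
    · exact hee0 i j (by omega)
    · exact heo i j
    · rw [mul_comm (Φ _)]
      exact heo j i
    · exact hoo0 i j (by omega)
  refine ⟨fun n => ?_, fun m n hmn => ?_, fun n => ?_⟩
  · obtain ⟨j, rfl | rfl⟩ := Nat.even_or_odd' n
    · rw [hΦeven, ← expand_eq_comp_X_pow]
      refine ⟨(hPmonic j).expand two_pos, ?_⟩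
      rw [natDegree_expand, hPdeg, mul_comm]
    · rw [hΦodd, ← expand_eq_comp_X_pow]
      have hm : (expand ℝ 2 (Ptα j)).Monic := (hPt j).1.expand two_pos
      refine ⟨(monic_X_add_C α).mul hm, ?_⟩
      rw [(monic_X_add_C α).natDegree_mul hm, natDegree_X_add_C, natDegree_expand, (hPt j).2]
      ring
  · rcases hmn.lt_or_gt with h | h
    · exact hlt0 m n h
    · rw [mul_comm (Φ m)]
      exact hlt0 n m h
  · obtain ⟨j, rfl | rfl⟩ := Nat.even_or_odd' n
    · rw [hee]
      exact hpos j
    · rw [hoo, hker j _ (hPtdeg j).le, functional_monic_pairing L (P j) j (hPmonic j) (hPdeg j)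
        (horth j) _ (hPt j).1 (hPt j).2]
      exact mul_pos (neg_pos.mpr (hc j)) (hpos j)
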